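/- Let p be an odd prime and A a finite nonempty symmetric subset of Aff(F_p), and set K := |A³|/|A|. Then either (i) A ⊆ Stab(x) for some x ∈ F_p, or both of the following hold: (ii) if |A| ≤ 2p then |π(A)| ≤ 2K⁴; and (iii) if |A| > 4p then |π(A)| ≤ 2K³·|A|/p and {(1,t) : t ∈ F_p} ⊆ A⁸. -/

import Mathlib

open Pointwise

/-- The affine group `Aff(F)`: pairs `(a, b) ∈ F* × F` acting as `x ↦ a·x + b`,
with multiplication `(a,b)·(c,d) = (ac, ad + b)` and identity `(1, 0)`. -/
@[ext]
structure Aff (F : Type*) [Field F] where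
  a : Fˣ
  b : F
deriving DecidableEq

namespace Aff

variable {F : Type*} [Field F]

instance : Mul (Aff F) := ⟨fun g h => ⟨g.a * h.a, (g.a : F) * h.b + g.b⟩⟩
instance : One (Aff F) := ⟨⟨1, 0⟩⟩
instance : Inv (Aff F) := ⟨fun g => ⟨g.a⁻¹, -(((g.a⁻¹ : Fˣ) : F) * g.b)⟩⟩

@[simp] lemma mul_a (g h : Aff F) : (g * h).a = g.a * h.a := rfl
@[simp] lemma mul_b (g h : Aff F) : (g * h).b = (g.a : F) * h.b + g.b := rfl
@[simp] lemma one_a : (1 : Aff F).a = 1 := rfl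
@[simp] lemma one_b : (1 : Aff F).b = 0 := rfl
@[simp] lemma inv_a (g : Aff F) : (g⁻¹).a = g.a⁻¹ := rfl
@[simp] lemma inv_b (g : Aff F) : (g⁻¹).b = -(((g.a⁻¹ : Fˣ) : F) * g.b) := rfl

instance : Group (Aff F) where
  mul_assoc g h k := by
    ext
    · simp [mul_assoc]
    · simp [mul_add, mul_assoc, add_assoc]
  one_mul g := by ext <;> simp
  mul_one g := by ext <;> simp
  inv_mul_cancel g := by
    ext
    · simp
    · simp

end Aff
section Szonyi

open Polynomial

/-- Total degree of a bivariate polynomial is at most `n`. -/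
def TotDegLE {F : Type*} [Field F] (n : ℕ) (P : F[X][X]) : Prop :=
  ∀ i j, n < i + j → (P.coeff i).coeff j = 0

lemma TotDegLE.mul {F : Type*} [Field F] {m n : ℕ} {P Q : F[X][X]}
    (hP : TotDegLE m P) (hQ : TotDegLE n Q) : TotDegLE (m + n) (P * Q) := by
  intro i j hij
  rw [coeff_mul, finsetSum_coeff]
  refine Finset.sum_eq_zero fun u hu => ?_
  rw [coeff_mul]
  refine Finset.sum_eq_zero fun v hv => ?_
  rw [Finset.HasAntidiagonal.mem_antidiagonal] at hu hv
  by_cases h : m < u.1 + v.1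
  · rw [hP _ _ h, zero_mul]
  · rw [hQ _ _ (by omega), mul_zero]

lemma TotDegLE.sub {F : Type*} [Field F] {n : ℕ} {P Q : F[X][X]}
    (hP : TotDegLE n P) (hQ : TotDegLE n Q) : TotDegLE n (P - Q) := by
  intro i j hij
  simp [hP i j hij, hQ i j hij]

lemma totDegLE_one {F : Type*} [Field F] : TotDegLE 0 (1 : F[X][X]) := by
  intro i j hij
  rw [coeff_one]
  split_ifs with h
  · rw [coeff_one, if_neg (by omega)]
  · simp

lemma totDegLE_X {F : Type*} [Field F] : TotDegLE 1 (X : F[X][X]) := by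
  intro i j hij
  rw [coeff_X]
  split_ifs with h
  · rw [coeff_one, if_neg (by omega)]
  · simp

lemma totDegLE_lin {F : Type*} [Field F] (a b : F) :
    TotDegLE 1 (X - C (C a * X + C b) : F[X][X]) := by
  refine totDegLE_X.sub ?_
  intro i j hij
  rw [coeff_C]
  split_ifs with h
  · have h1 : j ≠ 0 := by omega
    have h2 : (1 : ℕ) ≠ j := by omega
    simp [coeff_C, coeff_X, h1, h2]
  · simp

lemma exists_rem {F : Type*} [Field F] (R : F[X][X]) (k : ℕ) (hk : 1 ≤ k) (hm : R.Monic)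
    (hd : R.natDegree = k) (hT : TotDegLE k R) (n : ℕ) :
    ∃ r : F[X][X], TotDegLE n r ∧ (∀ i, k ≤ i → r.coeff i = 0) ∧ R ∣ X ^ n - r := by
  induction n with
  | zero =>
    refine ⟨1, totDegLE_one, fun i hi => ?_, by simp⟩
    rw [coeff_one, if_neg (by omega)]
  | succ n ih =>
    obtain ⟨r, h1, h2, h3⟩ := ih
    refine ⟨X * r - C (r.coeff (k - 1)) * R, ?_, ?_, ?_⟩
    · have hX : TotDegLE (n + 1) (X * r) := by
        rw [add_comm]; exact totDegLE_X.mul h1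
      refine hX.sub ?_
      intro i j hij
      rw [coeff_C_mul, coeff_mul]
      refine Finset.sum_eq_zero fun v hv => ?_
      rw [Finset.HasAntidiagonal.mem_antidiagonal] at hv
      by_cases h : n < (k - 1) + v.1
      · rw [h1 _ _ h, zero_mul]
      · rw [hT _ _ (by omega), mul_zero]
    · intro i hi
      obtain ⟨i, rfl⟩ : ∃ i', i = i' + 1 := ⟨i - 1, by omega⟩
      rw [coeff_sub, coeff_X_mul, coeff_C_mul]
      by_cases h : i + 1 = k
      · have : R.coeff (i + 1) = 1 := by rw [h, ← hd]; exact hm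
        rw [this, mul_one, show k - 1 = i by omega, sub_self]
      · rw [h2 i (by omega), coeff_eq_zero_of_natDegree_lt (p := R) (by omega)]; simp
    · have : X ^ (n + 1) - (X * r - C (r.coeff (k - 1)) * R)
          = X * (X ^ n - r) + C (r.coeff (k - 1)) * R := by ring
      rw [this]
      exact dvd_add (h3.mul_left _) (Dvd.intro_left _ rfl)

/-- Directions theorem of Rédei–Szőnyi type, for a family of affine maps. -/
lemma szonyi {p : ℕ} [Fact p.Prime] {ι : Type*} [DecidableEq ι] (A : Finset ι)
    (a b : ι → ZMod p) (hAp : A.card ≤ p) (D : Finset (ZMod p))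
    (hD : ∀ y, y ∉ D → ∀ g ∈ A, ∀ h ∈ A, a g * y + b g = a h * y + b h → g = h)
    (x : ZMod p) (hx : x ∈ D)
    (hdet : ∃ g ∈ A, ∃ h ∈ A, g ≠ h ∧ a g * x + b g = a h * x + b h)
    (hnc : ∃ g ∈ A, ∃ h ∈ A, a g * x + b g ≠ a h * x + b h) :
    A.card + 1 ≤ 2 * D.card := by
  classical
  have hp : p.Prime := Fact.out
  have hk2 : 2 ≤ A.card := by
    obtain ⟨g, hg, h, hh, hne, -⟩ := hdet
    exact Finset.one_lt_card.mpr ⟨g, hg, h, hh, hne⟩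
  have hD1 : 1 ≤ D.card := Finset.card_pos.mpr ⟨x, hx⟩
  have hDp : D.card ≤ p := by
    simpa [ZMod.card] using Finset.card_le_univ D
  set R : (ZMod p)[X][X] := ∏ g ∈ A, (X - C (C (a g) * X + C (b g))) with hR
  have hRm : R.Monic := monic_prod_of_monic _ _ fun g _ => monic_X_sub_C _
  have hRd : R.natDegree = A.card := by
    rw [hR, natDegree_prod_of_monic _ _ fun g _ => monic_X_sub_C _]
    simp only [natDegree_X_sub_C, Finset.sum_const, smul_eq_mul, mul_one]
  have hRT : TotDegLE A.card R := by
    have : ∀ B : Finset ι, TotDegLE B.card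
        (∏ g ∈ B, (X - C (C (a g) * X + C (b g)) : (ZMod p)[X][X])) := by
      intro B
      induction B using Finset.induction_on with
      | empty => simpa using totDegLE_one
      | insert g B hg ih =>
        rw [Finset.prod_insert hg, Finset.card_insert_of_notMem hg, add_comm]
        exact (totDegLE_lin _ _).mul ih
    exact this A
  obtain ⟨r, hrT, hrk, hdvd⟩ := exists_rem R A.card (by omega) hRm hRd hRT p
  -- specialisation
  have hRy : ∀ y, R.map (evalRingHom y) = ∏ g ∈ A, (X - C (a g * y + b g)) := by
    intro y
    rw [hR, Polynomial.map_prod]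
    refine Finset.prod_congr rfl fun g _ => ?_
    simp
  have hdvdy : ∀ y, (∏ g ∈ A, (X - C (a g * y + b g))) ∣
      X ^ p - r.map (evalRingHom y) := by
    intro y
    have := Polynomial.map_dvd (evalRingHom y) hdvd
    rw [hRy] at this
    simpa using this
  have hfer : (X ^ p - X : (ZMod p)[X]) = ∏ c : ZMod p, (X - C c) := by
    have := FiniteField.X_pow_card_sub_X_natDegree_eq (ZMod p) hp.one_lt
    have h2 := FiniteField.roots_X_pow_card_sub_X (ZMod p)
    rw [ZMod.card] at h2
    have hmon : (X ^ p - X : (ZMod p)[X]).Monic :=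
      monic_X_pow_sub (by rw [degree_X]; exact_mod_cast hp.one_lt)
    have h3 := prod_multiset_X_sub_C_of_monic_of_roots_card_eq hmon (by
      rw [h2, this, Finset.card_val, Finset.card_univ, ZMod.card])
    rw [h2] at h3
    exact h3.symm
  have hund : ∀ y, y ∉ D → r.map (evalRingHom y) = X := by
    intro y hy
    have h1 : (∏ g ∈ A, (X - C (a g * y + b g))) ∣ (X ^ p - X : (ZMod p)[X]) := by
      rw [hfer]
      have : ∏ g ∈ A, (X - C (a g * y + b g)) =
          ∏ c ∈ A.image (fun g => a g * y + b g), (X - C c) := by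
        rw [Finset.prod_image]
        intro g hg h hh e
        exact hD y hy g hg h hh e
      rw [this]
      exact Finset.prod_dvd_prod_of_subset _ _ _ (Finset.subset_univ _)
    have h2 := dvd_sub h1 (hdvdy y)
    rw [sub_sub_sub_cancel_left] at h2
    have hmon : (∏ g ∈ A, (X - C (a g * y + b g))).Monic :=
      monic_prod_of_monic _ _ fun g _ => monic_X_sub_C _
    by_contra hne
    have h3 := natDegree_le_of_dvd h2 (sub_ne_zero.mpr hne)
    have h4 : (∏ g ∈ A, (X - C (a g * y + b g))).natDegree = A.card := by
      rw [natDegree_prod_of_monic _ _ fun g _ => monic_X_sub_C _]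
      simp only [natDegree_X_sub_C, Finset.sum_const, smul_eq_mul, mul_one]
    have h5 : (r.map (evalRingHom y) - X).natDegree ≤ A.card - 1 := by
      rw [natDegree_le_iff_coeff_eq_zero]
      intro N hN
      rw [coeff_sub, coeff_map, hrk N (by omega), coeff_X, if_neg (by omega)]
      simp
    omega
  have hri : ∀ i, D.card < i → r.coeff i = 0 := by
    intro i hi
    have hiX : ∀ y ∉ D, (r.coeff i).eval y = 0 := by
      intro y hy
      have := congrArg (fun P => P.coeff i) (hund y hy)
      simp only [coeff_map, coe_evalRingHom] at this
      rw [this, coeff_X, if_neg (by omega)]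
    by_contra hne
    have hdeg : (r.coeff i).natDegree ≤ p - i := by
      rw [natDegree_le_iff_coeff_eq_zero]
      intro N hN
      exact hrT _ _ (by omega)
    by_cases hip : p < i
    · apply hne
      ext j
      rw [hrT _ _ (by omega)]; simp
    have hsub : Dᶜ ⊆ (r.coeff i).roots.toFinset := by
      intro y hy
      rw [Multiset.mem_toFinset, mem_roots hne]
      exact hiX y (Finset.mem_compl.mp hy)
    have hc := Finset.card_le_card hsub
    have hc2 := Multiset.toFinset_card_le (r.coeff i).roots
    have hc3 := card_roots' (r.coeff i)
    rw [Finset.card_compl, ZMod.card] at hc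
    omega
  set q : (ZMod p)[X] := r.map (evalRingHom x) with hq
  have hqd : q.natDegree ≤ D.card := by
    rw [natDegree_le_iff_coeff_eq_zero]
    intro N hN
    rw [hq, coeff_map, hri N hN]; simp
  have hqk : ∀ i, A.card ≤ i → q.coeff i = 0 := by
    intro i hi
    rw [hq, coeff_map, hrk i hi]; simp
  have hRx := hdvdy x
  rw [← hq] at hRx
  set S : (ZMod p)[X] := ∏ g ∈ A, (X - C (a g * x + b g)) with hS
  have hSmon : S.Monic := monic_prod_of_monic _ _ fun g _ => monic_X_sub_C _
  have hSroots : S.roots = A.val.map (fun g => a g * x + b g) := by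
    rw [← roots_multiset_prod_X_sub_C (A.val.map (fun g => a g * x + b g)), Multiset.map_map]
    rfl
  have hXq : X - q ≠ 0 := by
    intro h0
    rw [← sub_eq_zero.mp h0, hfer] at hRx
    have h1 : S.roots ≤ (∏ c : ZMod p, (X - C c)).roots := by
      apply roots.le_of_dvd _ hRx
      exact (monic_prod_of_monic _ _ fun g _ => monic_X_sub_C _).ne_zero
    rw [roots_prod_X_sub_C] at h1
    have h2 : S.roots.Nodup := Multiset.nodup_of_le h1 Finset.univ.nodup
    rw [hSroots] at h2
    obtain ⟨g, hg, h, hh, hne, he⟩ := hdet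
    exact hne (Multiset.inj_on_of_nodup_map h2 g hg h hh he)
  have hroot : ∀ c ∈ S.roots, q.eval c = c := by
    intro c hc
    have h1 : IsRoot S c := isRoot_of_mem_roots hc
    have h2 := h1.dvd hRx
    simp only [IsRoot, eval_sub, eval_pow, eval_X, ZMod.pow_card] at h2
    exact (sub_eq_zero.mp h2).symm
  have hq' : derivative q ≠ 0 := by
    intro h0
    have hconst : ∀ i, q.coeff (i + 1) = 0 := by
      intro i
      by_cases hi : A.card ≤ i + 1
      · exact hqk _ hi
      have h1 : (derivative q).coeff i = 0 := by rw [h0]; simp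
      rw [coeff_derivative] at h1
      rcases mul_eq_zero.mp h1 with h | h
      · exact h
      · exfalso
        have h2 : ((i + 1 : ℕ) : ZMod p) = 0 := by exact_mod_cast h
        rw [ZMod.natCast_eq_zero_iff] at h2
        have := Nat.le_of_dvd (by omega) h2
        omega
    have hqC : q = C (q.coeff 0) := by
      ext i
      cases i with
      | zero => simp
      | succ i => rw [hconst, coeff_C, if_neg (by omega)]
    obtain ⟨g, hg, h, hh, hne⟩ := hnc
    apply hne
    have hm : ∀ g ∈ A, a g * x + b g = q.coeff 0 := by
      intro g hg
      have := hroot (a g * x + b g) (by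
        rw [hSroots]; exact Multiset.mem_map_of_mem _ hg)
      rw [hqC] at this
      simpa using this.symm
    rw [hm g hg, hm h hh]
  have hle : S.roots ≤ ((X - q) * derivative q).roots := by
    rw [Multiset.le_iff_count]
    intro c
    by_cases hc : c ∈ S.roots
    swap
    · rw [Multiset.count_eq_zero_of_notMem hc]; exact Nat.zero_le _
    rw [count_roots, count_roots, rootMultiplicity_mul (mul_ne_zero hXq hq')]
    have h1 : 1 ≤ (X - q).rootMultiplicity c := by
      rw [Nat.one_le_iff_ne_zero, ← Nat.pos_iff_ne_zero, rootMultiplicity_pos hXq]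
      simp [IsRoot, hroot c hc]
    have h2 : (X - C c) ^ (S.rootMultiplicity c) ∣ X ^ p - q :=
      (pow_rootMultiplicity_dvd S c).trans hRx
    have h3 : (X - C c) ^ (S.rootMultiplicity c - 1) ∣ derivative q := by
      have := pow_sub_one_dvd_derivative_of_pow_dvd h2
      simpa [derivative_X_pow] using this
    have h4 := (le_rootMultiplicity_iff hq').mpr h3
    omega
  have hcard := Multiset.card_le_card hle
  have hcard2 := card_roots' ((X - q) * derivative q)
  have hnd : ((X - q) * derivative q).natDegree ≤ D.card + (D.card - 1) := by
    refine natDegree_mul_le.trans (add_le_add ?_ ?_)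
    · refine (natDegree_sub_le _ _).trans (max_le ?_ hqd)
      rw [natDegree_X]; exact hD1
    · exact (natDegree_derivative_le q).trans (by omega)
  rw [hSroots, Multiset.card_map, Finset.card_val] at hcard
  omega

end Szonyi

section Growth

/-- The action on the affine line. -/
def Aff.act {F : Type*} [Field F] (g : Aff F) (x : F) : F := (g.a : F) * x + g.b

lemma Aff.act_def {F : Type*} [Field F] (g : Aff F) (x : F) :
    g.act x = (g.a : F) * x + g.b := rfl

/-- Energy argument: some point of `D` has a large orbit. -/
lemma exists_large_orbit {F : Type*} [Field F] [DecidableEq F] (A : Finset (Aff F))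
    (hA : A.Nonempty) (D : Finset F) (hD : D.Nonempty) :
    ∃ x ∈ D, A.card * D.card + (A.image (fun g => g.act x)).card ≤
      (A.image (fun g => g.act x)).card * (D.card + A.card) := by
  set E : F → ℕ := fun x => ((A ×ˢ A).filter (fun q => q.1.act x = q.2.act x)).card with hE
  have hCS : ∀ x, A.card ^ 2 ≤ (A.image (fun g => g.act x)).card * E x := by
    intro x
    have h1 := sq_sum_le_card_mul_sum_sq (s := A.image (fun g => g.act x))
      (f := fun z => (A.filter (fun g => g.act x = z)).card)
    rw [← Finset.card_eq_sum_card_image] at h1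
    refine h1.trans (le_of_eq ?_)
    congr 1
    rw [hE]
    simp only
    rw [Finset.card_eq_sum_card_fiberwise (f := fun q : Aff F × Aff F => q.1.act x)
      (t := A.image (fun g => g.act x))]
    · refine Finset.sum_congr rfl fun z _ => ?_
      rw [sq, ← Finset.card_product]
      congr 1
      ext ⟨g, h⟩
      simp only [Finset.mem_product, Finset.mem_filter]
      constructor
      · rintro ⟨⟨h1, h2⟩, h3, h4⟩
        exact ⟨⟨⟨h1, h3⟩, h2.trans h4.symm⟩, h2⟩
      · rintro ⟨⟨⟨h1, h3⟩, h4⟩, h2⟩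
        exact ⟨⟨h1, h2⟩, h3, h4.symm.trans h2⟩
    · intro q hq
      simp only [Finset.coe_filter, Finset.mem_product, Set.mem_ofPred_eq] at hq
      exact Finset.mem_coe.mpr (Finset.mem_image_of_mem _ hq.1.1)
  have hsum : ∑ x ∈ D, E x + A.card ≤ A.card * D.card + A.card * A.card := by
    have h1 : ∑ x ∈ D, E x = ∑ q ∈ A ×ˢ A, (D.filter (fun x => q.1.act x = q.2.act x)).card := by
      simp only [hE, Finset.card_filter]
      exact Finset.sum_comm
    have h2 : ∑ q ∈ A ×ˢ A, (D.filter (fun x => q.1.act x = q.2.act x)).card ≤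
        ∑ q ∈ A ×ˢ A, (if q.1 = q.2 then D.card else 1) := by
      refine Finset.sum_le_sum fun q _ => ?_
      split_ifs with h
      · exact Finset.card_filter_le _ _
      · rw [Finset.card_le_one]
        intro x hx y hy
        rw [Finset.mem_filter] at hx hy
        have hx := hx.2
        have hy := hy.2
        rw [Aff.act_def, Aff.act_def] at hx hy
        by_contra hxy
        have h3 : ((q.1.a : F) - q.2.a) * (x - y) = 0 := by linear_combination hx - hy
        rcases mul_eq_zero.mp h3 with h4 | h4
        · apply h
          have h5 : (q.1.a : F) = q.2.a := sub_eq_zero.mp h4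
          have h6 : q.1.b = q.2.b := by rw [h5] at hx; exact add_left_cancel hx
          exact Aff.ext (Units.ext h5) h6
        · exact hxy (sub_eq_zero.mp h4)
    have h3 : ∑ q ∈ A ×ˢ A, (if q.1 = q.2 then D.card else 1) + A.card =
        A.card * D.card + A.card * A.card := by
      rw [Finset.sum_product]
      have h4 : ∀ g ∈ A, ∑ h ∈ A, (if g = h then D.card else 1) + 1 = D.card + A.card := by
        intro g hg
        rw [← Finset.add_sum_erase _ _ hg, if_pos rfl, add_assoc]
        congr 1
        rw [Finset.sum_congr rfl (g := fun _ => 1) (fun h hh => if_neg (Finset.ne_of_mem_erase hh).symm)]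
        rw [Finset.sum_const, smul_eq_mul, mul_one]
        exact Finset.card_erase_add_one hg
      have h5 : ∑ g ∈ A, (∑ h ∈ A, (if g = h then D.card else 1) + 1) =
          ∑ g ∈ A, (D.card + A.card) := Finset.sum_congr rfl h4
      rw [Finset.sum_add_distrib] at h5
      simp only [Finset.sum_const, smul_eq_mul, mul_one] at h5
      rw [h5]; ring
    omega
  by_contra hcon
  push Not at hcon
  have hApos : 0 < A.card := hA.card_pos
  -- each term is too large
  have key : ∀ x ∈ D, A.card * D.card + A.card * A.card < D.card * E x + A.card := by
    intro x hx
    have h1 := hcon x hx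
    have h2 := hCS x
    set m := (A.image (fun g => g.act x)).card
    have hm : 0 < m := Finset.card_pos.mpr (hA.image _)
    by_contra h3
    push Not at h3
    have h4 : m * (D.card * E x + A.card) ≤ m * (A.card * D.card + A.card * A.card) :=
      Nat.mul_le_mul_left _ h3
    nlinarith
  have h6 : ∑ x ∈ D, (A.card * D.card + A.card * A.card) < ∑ x ∈ D, (D.card * E x + A.card) :=
    Finset.sum_lt_sum_of_nonempty hD key
  simp only [Finset.sum_add_distrib, ← Finset.mul_sum, Finset.sum_const, smul_eq_mul] at h6
  have h7 := Nat.mul_le_mul_left D.card hsum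
  rw [mul_add, mul_add] at h7
  nlinarith

lemma mul_mem_pow {G : Type*} [Group G] [DecidableEq G] {A : Finset G} {m n : ℕ} {g h : G}
    (hg : g ∈ A ^ m) (hh : h ∈ A ^ n) : g * h ∈ A ^ (m + n) := by
  rw [pow_add]; exact Finset.mul_mem_mul hg hh

lemma mem_pow_one {G : Type*} [Group G] [DecidableEq G] {A : Finset G} {g : G}
    (hg : g ∈ A) : g ∈ A ^ 1 := by rwa [pow_one]

lemma inv_mem_of_sym {G : Type*} [Group G] [DecidableEq G] {A : Finset G} (hsym : A⁻¹ = A) {g : G}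
    (hg : g ∈ A) : g⁻¹ ∈ A := by
  rw [← hsym]; exact Finset.inv_mem_inv hg

/-- Conjugates of an element with a fixed point. -/
lemma conj_mem {F : Type*} [Field F] [DecidableEq F] {A : Finset (Aff F)}
    (hsym : A⁻¹ = A) {x : F} {g h : Aff F} (hg : g ∈ A) (hh : h ∈ A)
    (hx : g.act x = h.act x) (z : F) (hz : z ∈ A.image (fun g => g.act x)) :
    (⟨g.a⁻¹ * h.a, (1 - ((g.a⁻¹ * h.a : Fˣ) : F)) * z⟩ : Aff F) ∈ A ^ 4 := by
  obtain ⟨k, hk, rfl⟩ := Finset.mem_image.mp hz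
  have h1 : k * (g⁻¹ * h) * k⁻¹ ∈ A ^ (1 + (1 + 1) + 1) :=
    mul_mem_pow (mul_mem_pow (mem_pow_one hk) (mul_mem_pow (mem_pow_one (inv_mem_of_sym hsym hg))
      (mem_pow_one hh))) (mem_pow_one (inv_mem_of_sym hsym hk))
  convert h1 using 1
  ext
  · simp only [Aff.mul_a, Aff.inv_a]
    rw [mul_comm k.a, mul_inv_cancel_right]
  · simp only [Aff.mul_a, Aff.mul_b, Aff.inv_b, Aff.inv_a, Aff.act_def, Units.val_mul,
      Units.val_inv_eq_inv_val] at hx ⊢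
    have hga : (g.a : F) ≠ 0 := g.a.ne_zero
    have hka : (k.a : F) ≠ 0 := k.a.ne_zero
    have hb : h.b = g.a * x + g.b - h.a * x := by linear_combination -hx
    rw [hb]
    field_simp
    ring

lemma orbit_mul_proj_le {F : Type*} [Field F] [DecidableEq F] {A : Finset (Aff F)}
    (hsym : A⁻¹ = A) {x : F} {g h : Aff F} (hg : g ∈ A) (hh : h ∈ A) (hne : g ≠ h)
    (hx : g.act x = h.act x) :
    (A.image (fun g => g.act x)).card * (A.image Aff.a).card ≤ (A ^ 5).card := by
  classical
  have hα : (1 - ((g.a⁻¹ * h.a : Fˣ) : F)) ≠ 0 := by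
    intro h0
    have h1 : g.a⁻¹ * h.a = 1 := Units.ext (by rw [Units.val_one]; exact (sub_eq_zero.mp h0).symm)
    have h2 : g.a = h.a := inv_mul_eq_one.mp h1
    apply hne
    rw [Aff.act_def, Aff.act_def, h2] at hx
    exact Aff.ext h2 (add_left_cancel hx)
  have hsec : ∀ u : Fˣ, ∃ k : Aff F, u ∈ A.image Aff.a → k ∈ A ∧ k.a = u := by
    intro u
    by_cases hu : u ∈ A.image Aff.a
    · obtain ⟨k, hk, e⟩ := Finset.mem_image.mp hu
      exact ⟨k, fun _ => ⟨hk, e⟩⟩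
    · exact ⟨1, fun h => absurd h hu⟩
  choose s hs using hsec
  rw [← Finset.card_product]
  refine Finset.card_le_card_of_injOn
    (fun q => (⟨g.a⁻¹ * h.a, (1 - ((g.a⁻¹ * h.a : Fˣ) : F)) * q.1⟩ : Aff F) * s q.2) ?_ ?_
  · intro q hq
    rw [Finset.mem_coe, Finset.mem_product] at hq
    exact Finset.mem_coe.mpr (mul_mem_pow (conj_mem hsym hg hh hx _ hq.1)
      (mem_pow_one (hs _ hq.2).1))
  · rintro ⟨z, u⟩ hq ⟨z', u'⟩ hq' e
    rw [Finset.mem_coe, Finset.mem_product] at hq hq'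
    have ea := congrArg Aff.a e
    simp only [Aff.mul_a] at ea
    have e2 : u = u' := by
      have := mul_left_cancel ea
      rwa [(hs _ hq.2).2, (hs _ hq'.2).2] at this
    subst e2
    have e3 := mul_right_cancel e
    have e4 := congrArg Aff.b e3
    simp only at e4
    rw [mul_left_cancel₀ hα e4]

/-- Freiman's 3/2 argument. -/
lemma freiman {G : Type*} [Group G] [DecidableEq G] (A : Finset G) (hsym : A⁻¹ = A)
    (hA2 : 2 * (A ^ 2).card < 3 * A.card) {z w : G} (hz : z ∈ A ^ 2) (hw : w ∈ A ^ 2) :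
    z * w ∈ A ^ 2 := by
  have hbig : ∀ z ∈ A ^ 2, A.card < 2 * (A.filter (fun c => z⁻¹ * c ∈ A)).card := by
    intro z hz
    rw [pow_two] at hz
    obtain ⟨a, ha, b, hb, rfl⟩ := Finset.mem_mul.mp hz
    have h1 : (A.image (fun c => a⁻¹ * c)).card = A.card :=
      Finset.card_image_of_injective _ (mul_right_injective _)
    have h2 : (A.image (fun c => b * c)).card = A.card :=
      Finset.card_image_of_injective _ (mul_right_injective _)
    have h3 := Finset.card_union_add_card_inter (A.image (fun c => a⁻¹ * c))
      (A.image (fun c => b * c))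
    have h4 : (A.image (fun c => a⁻¹ * c) ∪ A.image (fun c => b * c)).card ≤ (A ^ 2).card := by
      apply Finset.card_le_card
      intro c hc
      rw [pow_two]
      rcases Finset.mem_union.mp hc with h | h
      · obtain ⟨d, hd, rfl⟩ := Finset.mem_image.mp h
        exact Finset.mul_mem_mul (inv_mem_of_sym hsym ha) hd
      · obtain ⟨d, hd, rfl⟩ := Finset.mem_image.mp h
        exact Finset.mul_mem_mul hb hd
    have h5 : (A.image (fun c => a⁻¹ * c) ∩ A.image (fun c => b * c)).card ≤
        (A.filter (fun c => (a * b)⁻¹ * c ∈ A)).card := by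
      refine Finset.card_le_card_of_injOn (fun c => a * c) ?_
        (fun _ _ _ _ e => mul_left_cancel e)
      intro c hc
      rw [Finset.mem_coe, Finset.mem_inter] at hc
      obtain ⟨d, hd, rfl⟩ := Finset.mem_image.mp hc.1
      obtain ⟨d', hd', e⟩ := Finset.mem_image.mp hc.2
      rw [Finset.mem_coe, Finset.mem_filter]
      refine ⟨by simpa using hd, ?_⟩
      have : (a * b)⁻¹ * (a * (a⁻¹ * d)) = d' := by
        rw [← e]; group
      simp only
      rw [this]; exact hd'
    omega
  have hwi : w⁻¹ ∈ A ^ 2 := by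
    rw [pow_two] at hw ⊢
    obtain ⟨a, ha, b, hb, rfl⟩ := Finset.mem_mul.mp hw
    rw [mul_inv_rev]
    exact Finset.mul_mem_mul (inv_mem_of_sym hsym hb) (inv_mem_of_sym hsym ha)
  have h1 := hbig z⁻¹ (by
    rw [pow_two] at hz ⊢
    obtain ⟨a, ha, b, hb, rfl⟩ := Finset.mem_mul.mp hz
    rw [mul_inv_rev]
    exact Finset.mul_mem_mul (inv_mem_of_sym hsym hb) (inv_mem_of_sym hsym ha))
  have h2 := hbig w hw
  obtain ⟨c, hc⟩ : (A.filter (fun c => z⁻¹⁻¹ * c ∈ A) ∩ A.filter (fun c => w⁻¹ * c ∈ A)).Nonempty := by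
    rw [← Finset.card_pos]
    have h3 := Finset.card_union_add_card_inter (A.filter (fun c => z⁻¹⁻¹ * c ∈ A))
      (A.filter (fun c => w⁻¹ * c ∈ A))
    have h4 : (A.filter (fun c => z⁻¹⁻¹ * c ∈ A) ∪ A.filter (fun c => w⁻¹ * c ∈ A)).card ≤ A.card :=
      Finset.card_le_card (Finset.union_subset (Finset.filter_subset _ _) (Finset.filter_subset _ _))
    omega
  rw [Finset.mem_inter, Finset.mem_filter, Finset.mem_filter, inv_inv] at hc
  have h5 : z * w = (z * c) * (w⁻¹ * c)⁻¹ := by group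
  rw [h5, pow_two]
  exact Finset.mul_mem_mul hc.1.2 (inv_mem_of_sym hsym hc.2.2)

/-- The case of very small tripling. -/
lemma small_case {p : ℕ} [Fact p.Prime] (hodd : Odd p) (A : Finset (Aff (ZMod p)))
    (hA : A.Nonempty) (hsym : A⁻¹ = A) (hA2 : 2 * (A ^ 2).card < 3 * A.card)
    (hAp : A.card ≤ 2 * p) :
    (∃ x : ZMod p, ∀ g ∈ A, g.b = x * (1 - (g.a : ZMod p))) ∨ (A.image Aff.a).card ≤ 2 := by
  have hp : p.Prime := Fact.out
  have h20 : (2 : ZMod p) ≠ 0 := by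
    intro h
    have h1 : ((2 : ℕ) : ZMod p) = 0 := by exact_mod_cast h
    rw [ZMod.natCast_eq_zero_iff] at h1
    have := (Nat.prime_dvd_prime_iff_eq hp Nat.prime_two).mp h1
    subst this
    exact absurd hodd (by decide)
  have hmul : ∀ z ∈ A ^ 2, ∀ w ∈ A ^ 2, z * w ∈ A ^ 2 :=
    fun z hz w hw => freiman A hsym hA2 hz hw
  have hAA : ∀ g ∈ A, ∀ h ∈ A, g * h ∈ A ^ 2 := fun g hg h hh => by
    rw [pow_two]; exact Finset.mul_mem_mul hg hh
  by_cases hU : ∃ t : ZMod p, t ≠ 0 ∧ (⟨1, t⟩ : Aff (ZMod p)) ∈ A ^ 2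
  · right
    obtain ⟨t, ht, htA⟩ := hU
    obtain ⟨g0, hg0⟩ := hA
    have hone : (1 : Aff (ZMod p)) ∈ A ^ 2 := by
      have := hAA g0 hg0 _ (inv_mem_of_sym hsym hg0)
      rwa [mul_inv_cancel] at this
    have hn : ∀ n : ℕ, (⟨1, n * t⟩ : Aff (ZMod p)) ∈ A ^ 2 := by
      intro n
      induction n with
      | zero =>
        convert hone using 1
        ext <;> simp
      | succ n ih =>
        convert hmul _ ih _ htA using 1
        ext
        · simp
        · simp; ring
    have hall : ∀ u : ZMod p, (⟨1, u⟩ : Aff (ZMod p)) ∈ A ^ 2 := by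
      intro u
      have := hn (u / t).val
      rwa [ZMod.natCast_zmod_val, div_mul_cancel₀ _ ht] at this
    have hle : p * (A.image Aff.a).card ≤ (A ^ 2).card := by
      classical
      have hsec : ∀ u : (ZMod p)ˣ, ∃ k : Aff (ZMod p), u ∈ A.image Aff.a → k ∈ A ∧ k.a = u := by
        intro u
        by_cases hu : u ∈ A.image Aff.a
        · obtain ⟨k, hk, e⟩ := Finset.mem_image.mp hu
          exact ⟨k, fun _ => ⟨hk, e⟩⟩
        · exact ⟨1, fun h => absurd h hu⟩
      choose s hs using hsec
      have hc : p * (A.image Aff.a).card =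
          ((Finset.univ : Finset (ZMod p)) ×ˢ (A.image Aff.a)).card := by
        rw [Finset.card_product, Finset.card_univ, ZMod.card]
      rw [hc]
      refine Finset.card_le_card_of_injOn
        (fun q => (⟨1, q.1⟩ : Aff (ZMod p)) * (g0 * s q.2)) ?_ ?_
      · intro q hq
        rw [Finset.mem_coe, Finset.mem_product] at hq
        exact Finset.mem_coe.mpr (hmul _ (hall _) _ (hAA _ hg0 _ (hs _ hq.2).1))
      · rintro ⟨z, u⟩ hq ⟨z', u'⟩ hq' e
        rw [Finset.mem_coe, Finset.mem_product] at hq hq'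
        have ea := congrArg Aff.a e
        simp only [Aff.mul_a, one_mul] at ea
        have e2 : u = u' := by
          have := mul_left_cancel ea
          rwa [(hs _ hq.2).2, (hs _ hq'.2).2] at this
        subst e2
        have e4 := congrArg Aff.b (mul_right_cancel e)
        simp only at e4
        rw [e4]
    by_contra h3
    push Not at h3
    have : p * 3 ≤ p * (A.image Aff.a).card := Nat.mul_le_mul_left _ h3
    omega
  · left
    push Not at hU
    have hU' : ∀ g ∈ A ^ 2, g.a = 1 → g = 1 := by
      intro g hg h1
      by_contra hne
      have hb : g.b ≠ 0 := fun h => hne (Aff.ext h1 h)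
      apply hU g.b hb
      rw [← h1]; exact hg
    have hcomm : ∀ g ∈ A, ∀ h ∈ A, g * h = h * g := by
      intro g hg h hh
      have h1 := hmul _ (hAA g hg h hh) _
        (hAA _ (inv_mem_of_sym hsym hg) _ (inv_mem_of_sym hsym hh))
      have h2 := hU' _ h1 (by
        simp only [Aff.mul_a, Aff.inv_a]
        rw [mul_mul_mul_comm, mul_inv_cancel, mul_inv_cancel, one_mul])
      have h3 : g * h * (h * g)⁻¹ = 1 := by rw [mul_inv_rev]; exact h2
      exact mul_inv_eq_one.mp h3
    by_cases hall : ∀ g ∈ A, g.a = 1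
    · refine ⟨0, fun g hg => ?_⟩
      have h1 := hU' _ (hAA g hg g hg) (by simp [hall g hg])
      have h2 := congrArg Aff.b h1
      simp only [Aff.mul_b, hall g hg, Aff.one_b, Units.val_one] at h2
      have h3 : (2 : ZMod p) * g.b = 0 := by linear_combination h2
      rw [(mul_eq_zero.mp h3).resolve_left h20]; simp
    · push Not at hall
      obtain ⟨g, hg, hga⟩ := hall
      have hne : (1 - (g.a : ZMod p)) ≠ 0 := by
        intro h0
        exact hga (Units.ext (by rw [Units.val_one]; exact (sub_eq_zero.mp h0).symm))
      refine ⟨g.b / (1 - (g.a : ZMod p)), fun h hh => ?_⟩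
      have h1 := congrArg Aff.b (hcomm g hg h hh)
      simp only [Aff.mul_b] at h1
      field_simp
      linear_combination -h1

end Growth

section Main

/-- If all elements of `A` agree at a point, then `A` is degenerate. -/
lemma collinear_case {p : ℕ} [Fact p.Prime] (A : Finset (Aff (ZMod p))) (hsym : A⁻¹ = A)
    (x z : ZMod p) (h : ∀ g ∈ A, g.act x = z) :
    (∃ x : ZMod p, ∀ g ∈ A, g.b = x * (1 - (g.a : ZMod p))) ∨ (A.image Aff.a).card ≤ 1 := by
  by_cases hxz : z = x
  · left
    refine ⟨x, fun g hg => ?_⟩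
    have := h g hg
    rw [Aff.act_def, hxz] at this
    linear_combination this
  · right
    have key : ∀ g ∈ A, (g.a : ZMod p) = -1 := by
      intro g hg
      have h1 := h g hg
      have h2 := h _ (inv_mem_of_sym hsym hg)
      simp only [Aff.act_def, Aff.inv_a, Aff.inv_b, Units.val_inv_eq_inv_val] at h1 h2
      have hga : (g.a : ZMod p) ≠ 0 := g.a.ne_zero
      field_simp at h2
      have h3 : ((g.a : ZMod p) + 1) * (x - z) = 0 := by linear_combination h1 + h2
      rcases mul_eq_zero.mp h3 with h4 | h4
      · exact eq_neg_of_add_eq_zero_left h4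
      · exact absurd (sub_eq_zero.mp h4).symm hxz
    rw [Finset.card_le_one]
    intro u hu v hv
    obtain ⟨g, hg, rfl⟩ := Finset.mem_image.mp hu
    obtain ⟨g', hg', rfl⟩ := Finset.mem_image.mp hv
    exact Units.ext (by rw [key g hg, key g' hg'])

lemma exists_coincidence {p : ℕ} [Fact p.Prime] (A : Finset (Aff (ZMod p)))
    (hAp : p < A.card) (x : ZMod p) :
    ∃ g ∈ A, ∃ h ∈ A, g ≠ h ∧ g.act x = h.act x := by
  refine Finset.exists_ne_map_eq_of_card_lt_of_maps_to (t := Finset.univ) ?_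
    (fun _ _ => Finset.mem_coe.mpr (Finset.mem_univ _))
  rwa [Finset.card_univ, ZMod.card]

/-- A determined direction with a large orbit. -/
lemma exists_good_direction {p : ℕ} [Fact p.Prime] (A : Finset (Aff (ZMod p)))
    (hA : A.Nonempty) (hsym : A⁻¹ = A) (hAp : A.card ≤ 2 * p)
    (hi : ¬ ∃ x : ZMod p, ∀ g ∈ A, g.b = x * (1 - (g.a : ZMod p)))
    (hπ : 1 < (A.image Aff.a).card) :
    ∃ x : ZMod p, (∃ g ∈ A, ∃ h ∈ A, g ≠ h ∧ g.act x = h.act x) ∧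
      A.card ≤ 3 * (A.image (fun g => g.act x)).card := by
  classical
  by_cases hlt : p < A.card
  · obtain ⟨x, -, hx⟩ := exists_large_orbit A hA Finset.univ Finset.univ_nonempty
    refine ⟨x, exists_coincidence A hlt x, ?_⟩
    rw [Finset.card_univ, ZMod.card] at hx
    set m := (A.image (fun g => g.act x)).card
    have hp : 0 < p := (Fact.out : p.Prime).pos
    have h1 : m * (p + A.card) ≤ m * (3 * p) := Nat.mul_le_mul_left _ (by omega)
    have h2 : p * A.card ≤ p * (3 * m) := by nlinarith
    exact Nat.le_of_mul_le_mul_left h2 hp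
  · push Not at hlt
    set D : Finset (ZMod p) :=
      Finset.univ.filter (fun x => ∃ g ∈ A, ∃ h ∈ A, g ≠ h ∧ g.act x = h.act x) with hD
    have hx0 : ∃ x0, x0 ∈ D := by
      obtain ⟨u, hu, v, hv, huv⟩ := Finset.one_lt_card.mp hπ
      obtain ⟨g, hg, rfl⟩ := Finset.mem_image.mp hu
      obtain ⟨h, hh, rfl⟩ := Finset.mem_image.mp hv
      have hne : (g.a : ZMod p) - h.a ≠ 0 := fun h0 => huv (Units.ext (sub_eq_zero.mp h0))
      refine ⟨(h.b - g.b) / ((g.a : ZMod p) - h.a), ?_⟩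
      rw [hD, Finset.mem_filter]
      refine ⟨Finset.mem_univ _, g, hg, h, hh, fun e => huv (by rw [e]), ?_⟩
      rw [Aff.act_def, Aff.act_def]
      have := div_mul_cancel₀ (h.b - g.b) hne
      linear_combination this
    obtain ⟨x0, hx0⟩ := hx0
    have hnc : ∃ g ∈ A, ∃ h ∈ A, (g.a : ZMod p) * x0 + g.b ≠ (h.a : ZMod p) * x0 + h.b := by
      by_contra hcon
      push Not at hcon
      obtain ⟨g0, hg0⟩ := hA
      rcases collinear_case A hsym x0 (g0.act x0) (fun g hg => hcon g hg g0 hg0) with h | h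
      · exact hi h
      · omega
    have hsz := szonyi A (fun g => (g.a : ZMod p)) (fun g => g.b) hlt D (by
      intro y hy g hg h hh e
      by_contra hne
      apply hy
      rw [hD, Finset.mem_filter]
      exact ⟨Finset.mem_univ _, g, hg, h, hh, hne, e⟩) x0 hx0 (Finset.mem_filter.mp hx0).2 hnc
    obtain ⟨x, hxD, hx⟩ := exists_large_orbit A hA D ⟨x0, hx0⟩
    refine ⟨x, (Finset.mem_filter.mp hxD).2, ?_⟩
    have hDpos : 0 < D.card := Finset.card_pos.mpr ⟨x0, hx0⟩
    set m := (A.image (fun g => g.act x)).card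
    have h1 : m * (D.card + A.card) ≤ m * (3 * D.card) := Nat.mul_le_mul_left _ (by omega)
    have h2 : D.card * A.card ≤ D.card * (3 * m) := by nlinarith
    exact Nat.le_of_mul_le_mul_left h2 hDpos

end Main

/-- **Theorem 1.6** (growth in Aff(F_p)): let `p` be an odd prime, `A` a finite nonempty
symmetric subset of `Aff(F_p)` and `K = |A³|/|A|`. Then either (i) `A ⊆ Stab(x)` for some
`x ∈ F_p`, or both: (ii) if `|A| ≤ 2p` then `|π(A)| ≤ 2K⁴`; and (iii) if `|A| > 4p` then
`|π(A)| ≤ 2K³·|A|/p` and `A⁸` contains the unipotent axis `{(1, t) : t ∈ F_p}`. -/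
theorem growth_in_Aff
    (p : ℕ) [Fact p.Prime] (hodd : Odd p)
    (A : Finset (Aff (ZMod p))) (hA : A.Nonempty) (hsym : A⁻¹ = A) :
    (∃ x : ZMod p, ∀ g ∈ A, g.b = x * (1 - (g.a : ZMod p))) ∨
    ((A.card ≤ 2 * p →
        ((A.image Aff.a).card : ℝ) ≤ 2 * (((A ^ 3).card : ℝ) / (A.card : ℝ)) ^ 4) ∧
     (4 * p < A.card →
        ((A.image Aff.a).card : ℝ) ≤
            2 * (((A ^ 3).card : ℝ) / (A.card : ℝ)) ^ 3 * (A.card : ℝ) / (p : ℝ) ∧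
          ∀ t : ZMod p, (⟨1, t⟩ : Aff (ZMod p)) ∈ A ^ 8)) := by
  classical
  by_cases hi : ∃ x : ZMod p, ∀ g ∈ A, g.b = x * (1 - (g.a : ZMod p))
  · exact Or.inl hi
  right
  have hp : p.Prime := Fact.out
  have hppos : (0 : ℝ) < p := by exact_mod_cast hp.pos
  have hApos : (0 : ℝ) < A.card := by exact_mod_cast hA.card_pos
  have h23 : (A ^ 2).card ≤ (A ^ 3).card := Finset.card_pow_mono (by norm_num) (by norm_num)
  have h13 : A.card ≤ (A ^ 3).card := by
    have := Finset.card_pow_mono (s := A) (m := 1) (n := 3) (by norm_num) (by norm_num)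
    rwa [pow_one] at this
  set K : ℝ := ((A ^ 3).card : ℝ) / (A.card : ℝ) with hK
  have hK3 : ((A ^ 3).card : ℝ) = K * A.card := by rw [hK]; field_simp
  have hK1 : 1 ≤ K := by
    rw [hK, le_div_iff₀ hApos, one_mul]; exact_mod_cast h13
  have hpow : ((A ^ 5).card : ℝ) ≤ K ^ 3 * A.card :=
    Finset.small_pow_of_small_tripling (by norm_num) hK3.le hsym
  have hK4 : 1 ≤ K ^ 4 := one_le_pow₀ hK1
  refine ⟨fun hAp => ?_, fun hAp => ?_⟩
  · by_cases hsmall : 2 * (A ^ 3).card < 3 * A.card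
    · rcases small_case hodd A hA hsym (by omega) hAp with h | h
      · exact absurd h hi
      · have : ((A.image Aff.a).card : ℝ) ≤ 2 := by exact_mod_cast h
        linarith
    push Not at hsmall
    have hK32 : 3 / 2 ≤ K := by
      rw [hK, le_div_iff₀ hApos]
      have : (3 : ℝ) * A.card ≤ 2 * (A ^ 3).card := by exact_mod_cast hsmall
      linarith
    by_cases hπ : 1 < (A.image Aff.a).card
    swap
    · have : ((A.image Aff.a).card : ℝ) ≤ 1 := by exact_mod_cast (not_lt.mp hπ)
      linarith
    obtain ⟨x, ⟨g, hg, h, hh, hne, he⟩, hm⟩ := exists_good_direction A hA hsym hAp hi hπ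
    have h5 := orbit_mul_proj_le hsym hg hh hne he
    set m := (A.image (fun g => g.act x)).card
    have hmpos : (0 : ℝ) < m := by
      have : 0 < A.card := hA.card_pos
      exact_mod_cast (by omega : 0 < m)
    have h5' : (m : ℝ) * (A.image Aff.a).card ≤ (A ^ 5).card := by exact_mod_cast h5
    have hm' : (A.card : ℝ) ≤ 3 * m := by exact_mod_cast hm
    have hK3p : 0 ≤ K ^ 3 := pow_nonneg (zero_le_one.trans hK1) 3
    have h6 : (m : ℝ) * (A.image Aff.a).card ≤ m * (3 * K ^ 3) := by
      calc (m : ℝ) * (A.image Aff.a).card ≤ K ^ 3 * A.card := h5'.trans hpow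
        _ ≤ K ^ 3 * (3 * m) := mul_le_mul_of_nonneg_left hm' hK3p
        _ = m * (3 * K ^ 3) := by ring
    have h7 := le_of_mul_le_mul_left h6 hmpos
    have h8 : K ^ 3 * (3 / 2) ≤ K ^ 3 * K := mul_le_mul_of_nonneg_left hK32 hK3p
    have h9 : K ^ 4 = K ^ 3 * K := by ring
    linarith
  · obtain ⟨x, -, hx⟩ := exists_large_orbit A hA Finset.univ Finset.univ_nonempty
    rw [Finset.card_univ, ZMod.card] at hx
    obtain ⟨g, hg, h, hh, hne, he⟩ := exists_coincidence A (by omega) x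
    have h5 := orbit_mul_proj_le hsym hg hh hne he
    have hconj := conj_mem hsym hg hh he
    have hm : p < 2 * (A.image (fun g => g.act x)).card := by
      by_contra hcon
      push Not at hcon
      have h1 : 2 * (A.image (fun g => g.act x)).card * (p + A.card) ≤ p * (p + A.card) :=
        Nat.mul_le_mul_right _ hcon
      have h2 : p * p < p * A.card := Nat.mul_lt_mul_of_pos_left (by omega) hp.pos
      nlinarith
    refine ⟨?_, fun t => ?_⟩
    · rw [le_div_iff₀ hppos]
      set m := (A.image (fun g => g.act x)).card
      have h5' : (m : ℝ) * (A.image Aff.a).card ≤ (A ^ 5).card := by exact_mod_cast h5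
      have hm' : (p : ℝ) ≤ 2 * m := by exact_mod_cast hm.le
      have hπ0 : (0 : ℝ) ≤ (A.image Aff.a).card := Nat.cast_nonneg _
      nlinarith [mul_le_mul_of_nonneg_left hm' hπ0]
    · set α : (ZMod p)ˣ := g.a⁻¹ * h.a with hα
      have hα1 : (1 - (α : ZMod p)) ≠ 0 := by
        intro h0
        have h1 : g.a⁻¹ * h.a = 1 :=
          Units.ext (by rw [Units.val_one]; exact (sub_eq_zero.mp h0).symm)
        have h2 : g.a = h.a := inv_mul_eq_one.mp h1
        apply hne
        rw [Aff.act_def, Aff.act_def, h2] at he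
        exact Aff.ext h2 (add_left_cancel he)
      set Z := A.image (fun g => g.act x) with hZ
      obtain ⟨z, hz⟩ : (Z ∩ Z.image (fun w => w + t / (1 - (α : ZMod p)))).Nonempty := by
        rw [← Finset.card_pos]
        have h3 := Finset.card_union_add_card_inter Z
          (Z.image (fun w => w + t / (1 - (α : ZMod p))))
        have h4 : (Z.image (fun w => w + t / (1 - (α : ZMod p)))).card = Z.card :=
          Finset.card_image_of_injective _ (add_left_injective _)
        have h5 := Finset.card_le_univ (Z ∪ Z.image (fun w => w + t / (1 - (α : ZMod p))))
        rw [ZMod.card] at h5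
        omega
      have hz1 := (Finset.mem_inter.mp hz).1
      obtain ⟨w, hw, hwz⟩ := Finset.mem_image.mp (Finset.mem_inter.mp hz).2
      have hsym4 : (A ^ 4)⁻¹ = A ^ 4 := by rw [← inv_pow, hsym]
      have h6 := mul_mem_pow (hconj z hz1) (m := 4) (n := 4)
        (inv_mem_of_sym hsym4 (hconj w hw))
      convert h6 using 1
      ext
      · simp
      · have hα0 : (α : ZMod p) ≠ 0 := α.ne_zero
        simp only [Aff.mul_b, Aff.inv_b, Units.val_inv_eq_inv_val]
        rw [← hwz]
        field_simp
        ring
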